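/- Let s ∈ (1/2, 2]. There exists C > 0 such that for every finitely supported real sequence (a_n)_{n≥0} satisfying ∑_{n≥0} a_n = 0 and ∑_{n≥0} (−1)^n·a_n = 0 (i.e. the function f(t) = ∑_{n≥0} a_n·cos(nt) vanishes at t=0 and t=π), if b_m = (2/π)·∫₀^π f(t)·sin(mt) dt for m ≥ 1, then ∑_{m≥1} m^{2s}·b_m² ≤ C · ∑_{n≥0} (1+n)^{2s}·a_n². -/

import Mathlib

open Real

/-! Two integrations by parts, whose boundary terms vanish because `f(0) = f(π) = 0`, give
`∑ (m² - n²) aₙ Iₘₙ = 0` with `Iₘₙ = ∫₀^π cos(nt) sin(mt) dt`. Hence, with `cₙ = n^s aₙ`,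
`m^s bₘ = (2/π) ∑ cₙ (n/m)^(2-s) Iₘₙ`. Replacing `(n/m)^(2-s)` by `1` leaves the sine coefficients
of `∑ cₙ cos(nt)`, which Bessel's inequality bounds in `ℓ²`. The error kernel is
`((n/m)^(2-s) - 1) Iₘₙ`, where `|Iₘₙ| ≤ 2m / |m² - n²|`; its numerator cancels the singularity at
`m = n`, so it is dominated by a kernel homogeneous of degree `-1`, to which Schur's test with the
weights `n^(-1/2)` applies as long as `1/2 < s < 5/2`. -/

/-! ### Schur's test -/

section Schur

variable {ι κ : Type*} {M : Finset ι} {S : Finset κ} {k : ι → κ → ℝ} {p : ι → ℝ} {q : κ → ℝ}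

theorem sq_sum_mul_le_of_schur_row {i : ι} {A : ℝ} (hq : ∀ j ∈ S, 0 < q j)
    (hrow : ∑ j ∈ S, |k i j| * q j ≤ A * p i) (c : κ → ℝ) :
    (∑ j ∈ S, c j * k i j) ^ 2 ≤ A * p i * ∑ j ∈ S, |k i j| * (c j ^ 2 / q j) := by
  have hnonneg : ∀ j ∈ S, 0 ≤ |k i j| * (c j ^ 2 / q j) := fun j hj ↦ by
    have := hq j hj
    positivity
  calc (∑ j ∈ S, c j * k i j) ^ 2
      ≤ (∑ j ∈ S, |k i j| * q j) * ∑ j ∈ S, |k i j| * (c j ^ 2 / q j) := by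
        refine Finset.sum_sq_le_sum_mul_sum_of_sq_le_mul S
          (fun j hj ↦ mul_nonneg (abs_nonneg _) (hq j hj).le) hnonneg fun j hj ↦ le_of_eq ?_
        have := (hq j hj).ne'
        rw [mul_pow, ← sq_abs (k i j)]
        field_simp
    _ ≤ A * p i * ∑ j ∈ S, |k i j| * (c j ^ 2 / q j) := by
        gcongr
        exact Finset.sum_nonneg hnonneg

theorem sum_sq_sum_mul_le_of_schur {A B : ℝ} (hA : 0 ≤ A) (hq : ∀ j ∈ S, 0 < q j)
    (hrow : ∀ i ∈ M, ∑ j ∈ S, |k i j| * q j ≤ A * p i)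
    (hcol : ∀ j ∈ S, ∑ i ∈ M, |k i j| * p i ≤ B * q j) (c : κ → ℝ) :
    ∑ i ∈ M, (∑ j ∈ S, c j * k i j) ^ 2 ≤ A * B * ∑ j ∈ S, c j ^ 2 := by
  calc ∑ i ∈ M, (∑ j ∈ S, c j * k i j) ^ 2
      ≤ ∑ i ∈ M, A * p i * ∑ j ∈ S, |k i j| * (c j ^ 2 / q j) :=
        Finset.sum_le_sum fun i hi ↦ sq_sum_mul_le_of_schur_row hq (hrow i hi) c
    _ = A * ∑ j ∈ S, c j ^ 2 / q j * ∑ i ∈ M, |k i j| * p i := by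
        simp only [Finset.mul_sum]
        rw [Finset.sum_comm]
        exact Finset.sum_congr rfl fun j _ ↦ Finset.sum_congr rfl fun i _ ↦ by ring
    _ ≤ A * ∑ j ∈ S, c j ^ 2 / q j * (B * q j) := by
        gcongr with j hj
        · have := hq j hj
          positivity
        · exact hcol j hj
    _ = A * B * ∑ j ∈ S, c j ^ 2 := by
        rw [mul_assoc, Finset.mul_sum (a := B)]
        congr 1
        refine Finset.sum_congr rfl fun j hj ↦ ?_
        have := (hq j hj).ne'
        field_simp

end Schur

/-! ### Kernels homogeneous of degree `-1` -/

theorem sum_Ico_add_one_rpow_le {r : ℝ} (hr : r ≤ 0) (hr' : r ≠ -1) {a b : ℕ} (ha : a ≠ 0)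
    (hab : a ≤ b) :
    ∑ n ∈ Finset.Ico a b, ((n + 1 : ℕ) : ℝ) ^ r ≤
      ((b : ℝ) ^ (r + 1) - (a : ℝ) ^ (r + 1)) / (r + 1) := by
  have ha' : (0 : ℝ) < a := by positivity
  have hab' : (a : ℝ) ≤ b := by exact_mod_cast hab
  have hanti : AntitoneOn (fun x : ℝ ↦ x ^ r) (Set.Icc a b) :=
    fun x hx y _ hxy ↦ rpow_le_rpow_of_nonpos (ha'.trans_le hx.1) hxy hr
  have hzero : (0 : ℝ) ∉ Set.uIcc (a : ℝ) b := by
    rw [Set.uIcc_of_le hab']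
    exact fun h ↦ h.1.not_gt ha'
  rw [← integral_rpow (Or.inr ⟨hr', hzero⟩)]
  exact hanti.sum_le_integral_Ico hab

theorem sum_rpow_sub_one_le {ε : ℝ} (hε : 0 < ε) (hε1 : ε ≤ 1) {m : ℕ} (hm : m ≠ 0)
    {S : Finset ℕ} (hS : ∀ n ∈ S, n ≠ 0 ∧ n ≤ m) :
    ∑ n ∈ S, (n : ℝ) ^ (ε - 1) ≤ (m : ℝ) ^ ε / ε := by
  have hsub : S ⊆ Finset.Ico 1 (m + 1) := fun n hn ↦ by
    have := hS n hn
    simp only [Finset.mem_Ico]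
    omega
  have hint := sum_Ico_add_one_rpow_le (r := ε - 1) (by linarith) (by linarith) one_ne_zero
    (Nat.one_le_iff_ne_zero.2 hm)
  have hone : 1 ≤ 1 / ε := (one_le_div hε).2 hε1
  calc ∑ n ∈ S, (n : ℝ) ^ (ε - 1)
      ≤ ∑ n ∈ Finset.Ico 1 (m + 1), (n : ℝ) ^ (ε - 1) :=
        Finset.sum_le_sum_of_subset_of_nonneg hsub fun _ _ _ ↦ by positivity
    _ = 1 + ∑ n ∈ Finset.Ico 1 m, ((n + 1 : ℕ) : ℝ) ^ (ε - 1) := by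
        rw [Finset.sum_eq_sum_Ico_succ_bot (by omega), Nat.cast_one, one_rpow,
          Finset.sum_Ico_add' (fun n : ℕ ↦ (n : ℝ) ^ (ε - 1))]
    _ ≤ 1 + ((m : ℝ) ^ ε - 1) / ε := by simpa using hint
    _ ≤ (m : ℝ) ^ ε / ε := by rw [sub_div]; linarith

theorem sum_rpow_neg_sub_one_le {ε : ℝ} (hε : 0 < ε) {m : ℕ} (hm : m ≠ 0)
    {S : Finset ℕ} (hS : ∀ n ∈ S, m < n) :
    ∑ n ∈ S, (n : ℝ) ^ (-ε - 1) ≤ (m : ℝ) ^ (-ε) / ε := by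
  have hsub : S ⊆ Finset.Ico (m + 1) (m + S.sup id + 1) := fun n hn ↦ by
    have := hS n hn
    have : n ≤ S.sup id := Finset.le_sup (f := id) hn
    simp only [Finset.mem_Ico]
    omega
  have hint := sum_Ico_add_one_rpow_le (r := -ε - 1) (by linarith) (by linarith) hm
    (Nat.le_add_right m (S.sup id))
  rw [sub_add_cancel] at hint
  calc ∑ n ∈ S, (n : ℝ) ^ (-ε - 1)
      ≤ ∑ n ∈ Finset.Ico (m + 1) (m + S.sup id + 1), (n : ℝ) ^ (-ε - 1) :=
        Finset.sum_le_sum_of_subset_of_nonneg hsub fun _ _ _ ↦ by positivity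
    _ = ∑ n ∈ Finset.Ico m (m + S.sup id), ((n + 1 : ℕ) : ℝ) ^ (-ε - 1) :=
        (Finset.sum_Ico_add' (fun n : ℕ ↦ (n : ℝ) ^ (-ε - 1)) _ _ 1).symm
    _ ≤ (((m + S.sup id : ℕ) : ℝ) ^ (-ε) - (m : ℝ) ^ (-ε)) / (-ε) := hint
    _ = ((m : ℝ) ^ (-ε) - ((m + S.sup id : ℕ) : ℝ) ^ (-ε)) / ε := by
        rw [div_neg, ← neg_div, neg_sub]
    _ ≤ (m : ℝ) ^ (-ε) / ε := by
        gcongr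
        exact sub_le_self _ (by positivity)

theorem sum_inv_mul_div_rpow_le {ε : ℝ} (hε : 0 < ε) (hε1 : ε ≤ 1) {m : ℕ} (hm : m ≠ 0)
    {S : Finset ℕ} (hS : ∀ n ∈ S, n ≠ 0 ∧ n ≤ m) :
    ∑ n ∈ S, (n : ℝ)⁻¹ * (n / m : ℝ) ^ ε ≤ 1 / ε := by
  have hm' : (0 : ℝ) < m := by positivity
  calc ∑ n ∈ S, (n : ℝ)⁻¹ * (n / m : ℝ) ^ ε
      = (m : ℝ) ^ (-ε) * ∑ n ∈ S, (n : ℝ) ^ (ε - 1) := by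
        rw [Finset.mul_sum]
        refine Finset.sum_congr rfl fun n hn ↦ ?_
        rw [div_rpow n.cast_nonneg hm'.le, rpow_neg hm'.le,
          rpow_sub_one (Nat.cast_ne_zero.2 (hS n hn).1)]
        ring
    _ ≤ (m : ℝ) ^ (-ε) * ((m : ℝ) ^ ε / ε) := by
        gcongr
        exact sum_rpow_sub_one_le hε hε1 hm hS
    _ = 1 / ε := by rw [← mul_div_assoc, ← rpow_add hm', neg_add_cancel, rpow_zero]

theorem sum_inv_mul_div_rpow_le_of_lt {ε : ℝ} (hε : 0 < ε) {m : ℕ} (hm : m ≠ 0)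
    {S : Finset ℕ} (hS : ∀ n ∈ S, m < n) :
    ∑ n ∈ S, (n : ℝ)⁻¹ * (m / n : ℝ) ^ ε ≤ 1 / ε := by
  have hm' : (0 : ℝ) < m := by positivity
  calc ∑ n ∈ S, (n : ℝ)⁻¹ * (m / n : ℝ) ^ ε
      = (m : ℝ) ^ ε * ∑ n ∈ S, (n : ℝ) ^ (-ε - 1) := by
        rw [Finset.mul_sum]
        refine Finset.sum_congr rfl fun n hn ↦ ?_
        rw [div_rpow hm'.le n.cast_nonneg, rpow_sub_one (Nat.cast_ne_zero.2 (hS n hn).ne_bot),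
          rpow_neg n.cast_nonneg]
        ring
    _ ≤ (m : ℝ) ^ ε * ((m : ℝ) ^ (-ε) / ε) := by
        gcongr
        exact sum_rpow_neg_sub_one_le hε hm hS
    _ = 1 / ε := by rw [← mul_div_assoc, ← rpow_add hm', add_neg_cancel, rpow_zero]

theorem sum_inv_mul_min_div_rpow_le {ε : ℝ} (hε : 0 < ε) (hε1 : ε ≤ 1) {m : ℕ} (hm : m ≠ 0)
    {S : Finset ℕ} (hS : 0 ∉ S) :
    ∑ n ∈ S, (n : ℝ)⁻¹ * min (n / m : ℝ) (m / n) ^ ε ≤ 2 / ε := by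
  have hlow : ∑ n ∈ S with n ≤ m, (n : ℝ)⁻¹ * (n / m : ℝ) ^ ε ≤ 1 / ε :=
    sum_inv_mul_div_rpow_le hε hε1 hm fun n hn ↦
      ⟨ne_of_mem_of_not_mem (Finset.mem_filter.1 hn).1 hS, (Finset.mem_filter.1 hn).2⟩
  have hhigh : ∑ n ∈ S with ¬n ≤ m, (n : ℝ)⁻¹ * (m / n : ℝ) ^ ε ≤ 1 / ε :=
    sum_inv_mul_div_rpow_le_of_lt hε hm fun n hn ↦ not_le.1 (Finset.mem_filter.1 hn).2
  calc ∑ n ∈ S, (n : ℝ)⁻¹ * min (n / m : ℝ) (m / n) ^ ε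
      = ∑ n ∈ S with n ≤ m, (n : ℝ)⁻¹ * min (n / m : ℝ) (m / n) ^ ε +
          ∑ n ∈ S with ¬n ≤ m, (n : ℝ)⁻¹ * min (n / m : ℝ) (m / n) ^ ε :=
        (Finset.sum_filter_add_sum_filter_not S (· ≤ m) _).symm
    _ ≤ ∑ n ∈ S with n ≤ m, (n : ℝ)⁻¹ * (n / m : ℝ) ^ ε +
          ∑ n ∈ S with ¬n ≤ m, (n : ℝ)⁻¹ * (m / n : ℝ) ^ ε := by
        gcongr
        · exact min_le_left _ _
        · exact min_le_right _ _
    _ ≤ 1 / ε + 1 / ε := add_le_add hlow hhigh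
    _ = 2 / ε := by ring

theorem sum_abs_mul_inv_sqrt_le {k : ℕ → ℝ} {L ε : ℝ} (hL : 0 ≤ L) (hε : 0 < ε) (hε1 : ε ≤ 1)
    {m : ℕ} (hm : m ≠ 0) {S : Finset ℕ} (hS : 0 ∉ S)
    (hk : ∀ n ∈ S, |k n| ≤ L * min (n / m : ℝ) (m / n) ^ ε / (√m * √n)) :
    ∑ n ∈ S, |k n| * (√n)⁻¹ ≤ 2 * L / ε * (√m)⁻¹ := by
  calc ∑ n ∈ S, |k n| * (√n)⁻¹
      ≤ ∑ n ∈ S, L * (√m)⁻¹ * ((n : ℝ)⁻¹ * min (n / m : ℝ) (m / n) ^ ε) := by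
        refine Finset.sum_le_sum fun n hn ↦ ?_
        calc |k n| * (√n)⁻¹
            ≤ L * min (n / m : ℝ) (m / n) ^ ε / (√m * √n) * (√n)⁻¹ := by
              gcongr
              exact hk n hn
          _ = L * (√m)⁻¹ * ((√n * √n)⁻¹ * min (n / m : ℝ) (m / n) ^ ε) := by
              rw [div_eq_mul_inv, mul_inv, mul_inv]
              ring
          _ = L * (√m)⁻¹ * ((n : ℝ)⁻¹ * min (n / m : ℝ) (m / n) ^ ε) := by
              rw [mul_self_sqrt n.cast_nonneg]
    _ ≤ L * (√m)⁻¹ * (2 / ε) := by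
        rw [← Finset.mul_sum]
        gcongr
        exact sum_inv_mul_min_div_rpow_le hε hε1 hm hS
    _ = 2 * L / ε * (√m)⁻¹ := by ring

theorem sum_sq_sum_mul_le_of_abs_le_min_div_rpow {k : ℕ → ℕ → ℝ} {L ε : ℝ} (hL : 0 ≤ L)
    (hε : 0 < ε) (hε1 : ε ≤ 1) {M S : Finset ℕ} (hM : 0 ∉ M) (hS : 0 ∉ S)
    (hk : ∀ m ∈ M, ∀ n ∈ S, |k m n| ≤ L * min (n / m : ℝ) (m / n) ^ ε / (√m * √n)) (c : ℕ → ℝ) :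
    ∑ m ∈ M, (∑ n ∈ S, c n * k m n) ^ 2 ≤ (2 * L / ε) ^ 2 * ∑ n ∈ S, c n ^ 2 := by
  rw [sq (2 * L / ε)]
  refine sum_sq_sum_mul_le_of_schur (p := fun m : ℕ ↦ (√m)⁻¹) (q := fun n : ℕ ↦ (√n)⁻¹)
    (by positivity) (fun n hn ↦ ?_) (fun m hm ↦ ?_) (fun n hn ↦ ?_) c
  · have := ne_of_mem_of_not_mem hn hS
    positivity
  · exact sum_abs_mul_inv_sqrt_le hL hε hε1 (ne_of_mem_of_not_mem hm hM) hS (hk m hm)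
  · refine sum_abs_mul_inv_sqrt_le hL hε hε1 (ne_of_mem_of_not_mem hn hS) hM fun m hm ↦ ?_
    rw [min_comm, mul_comm √n]
    exact hk m hm n hn

/-! ### Orthogonality and Bessel's inequality -/

section Orthogonal

variable {ι : Type*} {S : Finset ι} {e : ι → ℝ → ℝ} {g : ℝ → ℝ} {a b κ : ℝ}

theorem integral_sum_mul (he : ∀ i ∈ S, Continuous (e i)) (hg : Continuous g) (c : ι → ℝ) :
    ∫ t in a..b, (∑ i ∈ S, c i * e i t) * g t = ∑ i ∈ S, c i * ∫ t in a..b, e i t * g t := by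
  simp_rw [Finset.sum_mul, mul_assoc]
  rw [intervalIntegral.integral_finsetSum (f := fun i t ↦ c i * (e i t * g t)) fun i hi ↦
    (continuous_const.mul ((he i hi).mul hg)).intervalIntegrable a b]
  simp_rw [intervalIntegral.integral_const_mul]

variable [DecidableEq ι]

theorem integral_sq_sum_of_orthogonal (he : ∀ i ∈ S, Continuous (e i))
    (horth : ∀ i ∈ S, ∀ j ∈ S, ∫ t in a..b, e i t * e j t = if i = j then κ else 0) (c : ι → ℝ) :
    ∫ t in a..b, (∑ i ∈ S, c i * e i t) ^ 2 = κ * ∑ i ∈ S, c i ^ 2 := by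
  have hcont : Continuous fun t ↦ ∑ j ∈ S, c j * e j t :=
    continuous_finsetSum S fun j hj ↦ continuous_const.mul (he j hj)
  have hcoeff : ∀ i ∈ S, ∫ t in a..b, e i t * ∑ j ∈ S, c j * e j t = κ * c i := fun i hi ↦ by
    simp_rw [mul_comm (e i _)]
    rw [integral_sum_mul he (he i hi),
      Finset.sum_congr rfl fun j hj ↦ congrArg (c j * ·) (horth j hj i hi)]
    simp [hi, mul_comm]
  simp_rw [sq]
  rw [integral_sum_mul he hcont, Finset.mul_sum]
  exact Finset.sum_congr rfl fun i hi ↦ by rw [hcoeff i hi]; ring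

theorem sum_sq_integral_mul_le_of_orthogonal (hab : a ≤ b) (hκ : 0 < κ)
    (he : ∀ i ∈ S, Continuous (e i))
    (horth : ∀ i ∈ S, ∀ j ∈ S, ∫ t in a..b, e i t * e j t = if i = j then κ else 0)
    (hg : Continuous g) :
    ∑ i ∈ S, (∫ t in a..b, g t * e i t) ^ 2 ≤ κ * ∫ t in a..b, g t ^ 2 := by
  set B : ι → ℝ := fun i ↦ ∫ t in a..b, g t * e i t with hB
  set h : ℝ → ℝ := fun t ↦ ∑ i ∈ S, B i * e i t
  have hcont : Continuous h := continuous_finsetSum S fun j hj ↦ continuous_const.mul (he j hj)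
  have hnorm : ∫ t in a..b, h t ^ 2 = κ * ∑ i ∈ S, B i ^ 2 :=
    integral_sq_sum_of_orthogonal he horth B
  have hinner : ∫ t in a..b, h t * g t = ∑ i ∈ S, B i ^ 2 := by
    rw [integral_sum_mul he hg]
    simp_rw [mul_comm (e _ _), sq, hB]
  have hexpand : ∫ t in a..b, (κ * g t - h t) ^ 2 =
      κ ^ 2 * (∫ t in a..b, g t ^ 2) - 2 * κ * (∫ t in a..b, h t * g t) + ∫ t in a..b, h t ^ 2 := by
    rw [← intervalIntegral.integral_const_mul, ← intervalIntegral.integral_const_mul,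
      ← intervalIntegral.integral_sub, ← intervalIntegral.integral_add]
    · congr 1
      ext t
      ring
    all_goals exact Continuous.intervalIntegrable (by fun_prop) _ _
  have hnonneg : 0 ≤ κ * (κ * (∫ t in a..b, g t ^ 2) - ∑ i ∈ S, B i ^ 2) := calc
    0 ≤ ∫ t in a..b, (κ * g t - h t) ^ 2 :=
        intervalIntegral.integral_nonneg hab fun _ _ ↦ sq_nonneg _
    _ = _ := by rw [hexpand, hinner, hnorm]; ring
  exact sub_nonneg.1 (nonneg_of_mul_nonneg_right hnonneg hκ)

end Orthogonal

theorem integral_cos_int_mul (k : ℤ) :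
    ∫ t in (0 : ℝ)..π, cos (k * t) = if k = 0 then π else 0 := by
  split_ifs with hk
  · simp [hk]
  · rw [intervalIntegral.integral_comp_mul_left cos (Int.cast_ne_zero.2 hk), integral_cos,
      sin_int_mul_pi]
    simp

theorem integral_cos_sub_int_mul_add_cos_add_int_mul {m n : ℕ} (hm : m ≠ 0) (σ : ℝ) :
    ∫ t in (0 : ℝ)..π, (cos (((m - n : ℤ) : ℝ) * t) + σ * cos (((m + n : ℤ) : ℝ) * t)) / 2 =
      if m = n then π / 2 else 0 := by
  have hadd : (m : ℤ) + n ≠ 0 := by omega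
  have hsub : (m : ℤ) - n = 0 ↔ m = n := by omega
  rw [intervalIntegral.integral_div, intervalIntegral.integral_add
    (Continuous.intervalIntegrable (by fun_prop) _ _)
    (Continuous.intervalIntegrable (by fun_prop) _ _), intervalIntegral.integral_const_mul,
    integral_cos_int_mul, integral_cos_int_mul]
  simp only [hadd, hsub, if_false, mul_zero, add_zero, ite_div, zero_div]

theorem integral_cos_nat_mul_mul_cos_nat_mul {m : ℕ} (hm : m ≠ 0) (n : ℕ) :
    ∫ t in (0 : ℝ)..π, cos (m * t) * cos (n * t) = if m = n then π / 2 else 0 := by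
  rw [← integral_cos_sub_int_mul_add_cos_add_int_mul hm 1]
  congr 1
  ext t
  push_cast
  rw [sub_mul, add_mul, cos_sub, cos_add]
  ring

theorem integral_sin_nat_mul_mul_sin_nat_mul {m : ℕ} (hm : m ≠ 0) (n : ℕ) :
    ∫ t in (0 : ℝ)..π, sin (m * t) * sin (n * t) = if m = n then π / 2 else 0 := by
  rw [← integral_cos_sub_int_mul_add_cos_add_int_mul hm (-1)]
  congr 1
  ext t
  push_cast
  rw [sub_mul, add_mul, cos_sub, cos_add]
  ring

/-! ### The matrix from cosine to sine coefficients -/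

/-- The matrix `∫₀^π cos(nt) sin(mt) dt` which, up to the factor `2/π`, sends cosine coefficients
(column index `n`) to sine coefficients (row index `m`). -/
noncomputable def cosSinIntegral (m n : ℕ) : ℝ := ∫ t in (0 : ℝ)..π, cos (n * t) * sin (m * t)

theorem sq_sub_sq_mul_cosSinIntegral (m n : ℕ) :
    ((m : ℝ) ^ 2 - (n : ℝ) ^ 2) * cosSinIntegral m n = m * (1 - (-1) ^ m * (-1) ^ n) := by
  have hderiv : ∀ t ∈ Set.uIcc 0 π,
      HasDerivAt (fun t ↦ -(m * (cos (m * t) * cos (n * t)) + n * (sin (m * t) * sin (n * t))))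
        (((m : ℝ) ^ 2 - (n : ℝ) ^ 2) * (cos (n * t) * sin (m * t))) t := fun t _ ↦ by
    have hlin : ∀ k : ℕ, HasDerivAt (fun t : ℝ ↦ (k : ℝ) * t) k t := fun k ↦ by
      simpa using (hasDerivAt_id t).const_mul (k : ℝ)
    convert! ((((hlin m).cos.mul (hlin n).cos).const_mul (m : ℝ)).add
      (((hlin m).sin.mul (hlin n).sin).const_mul (n : ℝ))).neg using 1
    ring
  rw [cosSinIntegral, ← intervalIntegral.integral_const_mul,
    intervalIntegral.integral_eq_sub_of_hasDerivAt hderiv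
      (Continuous.intervalIntegrable (by fun_prop) _ _)]
  simp only [cos_nat_mul_pi, sin_nat_mul_pi, mul_zero, cos_zero, sin_zero]
  ring

theorem abs_sq_sub_sq_mul_abs_cosSinIntegral_le (m n : ℕ) :
    |(m : ℝ) ^ 2 - (n : ℝ) ^ 2| * |cosSinIntegral m n| ≤ 2 * m := by
  rw [← abs_mul, sq_sub_sq_mul_cosSinIntegral, abs_mul, Nat.abs_cast, ← pow_add, mul_comm]
  gcongr
  rcases Nat.even_or_odd (m + n) with h | h <;> norm_num [h.neg_one_pow]

theorem sq_mul_sum_mul_cosSinIntegral {S : Finset ℕ} {a : ℕ → ℝ} (h0 : ∑ n ∈ S, a n = 0)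
    (hπ : ∑ n ∈ S, (-1 : ℝ) ^ n * a n = 0) (m : ℕ) :
    (m : ℝ) ^ 2 * ∑ n ∈ S, a n * cosSinIntegral m n =
      ∑ n ∈ S, a n * ((n : ℝ) ^ 2 * cosSinIntegral m n) := by
  rw [← sub_eq_zero, Finset.mul_sum, ← Finset.sum_sub_distrib]
  calc _ = ∑ n ∈ S, (m * a n - m * (-1) ^ m * ((-1 : ℝ) ^ n * a n)) :=
        Finset.sum_congr rfl fun n _ ↦ by
          linear_combination a n * sq_sub_sq_mul_cosSinIntegral m n
    _ = 0 := by
        rw [Finset.sum_sub_distrib, ← Finset.mul_sum, ← Finset.mul_sum, h0, hπ]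
        ring

theorem sum_sq_sum_mul_cosSinIntegral_le {M S : Finset ℕ} (hM : 0 ∉ M) (hS : 0 ∉ S) (c : ℕ → ℝ) :
    ∑ m ∈ M, (∑ n ∈ S, c n * cosSinIntegral m n) ^ 2 ≤ (π / 2) ^ 2 * ∑ n ∈ S, c n ^ 2 := by
  have hparseval : ∫ t in (0 : ℝ)..π, (∑ n ∈ S, c n * cos (n * t)) ^ 2 =
      π / 2 * ∑ n ∈ S, c n ^ 2 :=
    integral_sq_sum_of_orthogonal (fun n _ ↦ by fun_prop) (fun m hm n _ ↦
      integral_cos_nat_mul_mul_cos_nat_mul (ne_of_mem_of_not_mem hm hS) n) c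
  calc ∑ m ∈ M, (∑ n ∈ S, c n * cosSinIntegral m n) ^ 2
      = ∑ m ∈ M, (∫ t in (0 : ℝ)..π, (∑ n ∈ S, c n * cos (n * t)) * sin (m * t)) ^ 2 :=
        Finset.sum_congr rfl fun m _ ↦ by
          rw [integral_sum_mul (fun n _ ↦ by fun_prop) (by fun_prop)]
          rfl
    _ ≤ π / 2 * ∫ t in (0 : ℝ)..π, (∑ n ∈ S, c n * cos (n * t)) ^ 2 :=
        sum_sq_integral_mul_le_of_orthogonal pi_pos.le (half_pos pi_pos) (fun m _ ↦ by fun_prop)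
          (fun m hm n _ ↦ integral_sin_nat_mul_mul_sin_nat_mul (ne_of_mem_of_not_mem hm hM) n)
          (by fun_prop)
    _ = (π / 2) ^ 2 * ∑ n ∈ S, c n ^ 2 := by rw [hparseval]; ring

/-! ### The error kernel -/

theorem abs_rpow_sub_one_le {x α β : ℝ} (hx : 0 < x) (hx1 : x ≤ 1) (hβ : -2 ≤ β) (hβ0 : β ≤ 0)
    (hβα : β ≤ α) (hα : α ≤ 2) : |x ^ α - 1| ≤ x ^ β * (1 - x ^ 2) := by
  have hrpow_two : x ^ (2 : ℝ) = x ^ 2 := rpow_two x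
  have hβ_ge_one : 1 ≤ x ^ β := one_le_rpow_of_pos_of_le_one_of_nonpos hx hx1 hβ0
  have hsq_le_one : x ^ 2 ≤ 1 := pow_le_one₀ hx.le hx1
  rw [abs_sub_le_iff]
  constructor
  · have hle : x ^ α ≤ x ^ β := rpow_le_rpow_of_exponent_ge hx hx1 hβα
    have hprod : x ^ β * x ^ 2 ≤ 1 := by
      rw [← hrpow_two, ← rpow_add hx]
      exact rpow_le_one hx.le hx1 (by linarith)
    linarith
  · have hle : x ^ 2 ≤ x ^ α := hrpow_two ▸ rpow_le_rpow_of_exponent_ge hx hx1 hα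
    linarith [le_mul_of_one_le_left (sub_nonneg.2 hsq_le_one) hβ_ge_one]

theorem abs_rpow_sub_one_le_min_inv_rpow {x α ε : ℝ} (hx : 0 < x) (hε : 0 ≤ ε)
    (hε' : ε ≤ 1 / 2) (hα : ε - 1 / 2 ≤ α) (hα' : α ≤ 3 / 2 - ε) :
    |x ^ α - 1| ≤ min x x⁻¹ ^ ε / √x * |1 - x ^ 2| := by
  rcases le_total x 1 with hx1 | hx1
  · calc |x ^ α - 1|
        ≤ x ^ (ε - 1 / 2) * (1 - x ^ 2) :=
          abs_rpow_sub_one_le hx hx1 (by linarith) (by linarith) hα (by linarith)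
      _ = min x x⁻¹ ^ ε / √x * |1 - x ^ 2| := by
          rw [min_eq_left (hx1.trans (one_le_inv_iff₀.2 ⟨hx, hx1⟩)), rpow_sub hx, ← sqrt_eq_rpow,
            abs_of_nonneg (sub_nonneg.2 (pow_le_one₀ hx.le hx1))]
  · have hinv : x⁻¹ ≤ 1 := inv_le_one_of_one_le₀ hx1
    have hsplit : x⁻¹ ^ (ε - 3 / 2) = x⁻¹ ^ ε * (x ^ 2 / √x) := by
      rw [sub_eq_add_neg, rpow_add (inv_pos.2 hx), inv_rpow hx.le (-(3 / 2)), rpow_neg hx.le,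
        inv_inv, sqrt_eq_rpow, ← rpow_two, ← rpow_sub hx]
      norm_num
    calc |x ^ α - 1|
        = |x⁻¹ ^ (-α) - 1| := by rw [inv_rpow hx.le, rpow_neg hx.le, inv_inv]
      _ ≤ x⁻¹ ^ (ε - 3 / 2) * (1 - x⁻¹ ^ 2) :=
          abs_rpow_sub_one_le (inv_pos.2 hx) hinv (by linarith) (by linarith) (by linarith)
            (by linarith)
      _ = min x x⁻¹ ^ ε / √x * |1 - x ^ 2| := by
          rw [min_eq_right (hinv.trans hx1), hsplit, abs_sub_comm,
            abs_of_nonneg (sub_nonneg.2 (one_le_pow₀ hx1))]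
          field_simp

/-- The error made in the kernel of `c ↦ (m^s bₘ)`, where `cₙ = n^s aₙ`, when the multiplier
`(n/m)^(2-s)` is replaced by `1`. -/
noncomputable def cosSinRemainder (s : ℝ) (m n : ℕ) : ℝ :=
  ((n / m : ℝ) ^ (2 - s) - 1) * cosSinIntegral m n

theorem abs_cosSinRemainder_le {s ε : ℝ} (hε : 0 ≤ ε) (hε' : ε ≤ 1 / 2) (hs : 1 / 2 + ε ≤ s)
    (hs' : s ≤ 5 / 2 - ε) {m n : ℕ} (hm : m ≠ 0) (hn : n ≠ 0) :
    |cosSinRemainder s m n| ≤ 2 * min (n / m : ℝ) (m / n) ^ ε / (√m * √n) := by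
  have hm' : (0 : ℝ) < m := by positivity
  have hn' : (0 : ℝ) < n := by positivity
  have hfactor : |1 - (n / m : ℝ) ^ 2| = |(m : ℝ) ^ 2 - (n : ℝ) ^ 2| / m ^ 2 := by
    rw [← abs_of_pos (pow_pos hm' 2), ← abs_div, abs_of_pos (pow_pos hm' 2)]
    congr 1
    field_simp
  have hpow := abs_rpow_sub_one_le_min_inv_rpow (x := n / m) (α := 2 - s) (by positivity) hε hε'
    (by linarith) (by linarith)
  rw [inv_div, hfactor] at hpow
  set μ := min (n / m : ℝ) (m / n) ^ ε
  calc |cosSinRemainder s m n|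
      ≤ μ / √(n / m) * (|(m : ℝ) ^ 2 - (n : ℝ) ^ 2| / m ^ 2) * |cosSinIntegral m n| := by
        rw [cosSinRemainder, abs_mul]
        gcongr
    _ = μ / √(n / m) / m ^ 2 * (|(m : ℝ) ^ 2 - (n : ℝ) ^ 2| * |cosSinIntegral m n|) := by ring
    _ ≤ μ / √(n / m) / m ^ 2 * (2 * m) := by
        refine mul_le_mul_of_nonneg_left ?_ (by positivity)
        exact abs_sq_sub_sq_mul_abs_cosSinIntegral_le m n
    _ = 2 * μ / (√m * √n) := by
        rw [sqrt_div hn'.le]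
        field_simp
        rw [sq_sqrt hm'.le]

theorem rpow_mul_sum_mul_cosSinIntegral (s : ℝ) {S : Finset ℕ} {a : ℕ → ℝ}
    (h0 : ∑ n ∈ S, a n = 0) (hπ : ∑ n ∈ S, (-1 : ℝ) ^ n * a n = 0) {m : ℕ} (hm : m ≠ 0) :
    (m : ℝ) ^ s * ∑ n ∈ S, a n * cosSinIntegral m n =
      ∑ n ∈ S.erase 0, (n : ℝ) ^ s * a n * cosSinIntegral m n +
        ∑ n ∈ S.erase 0, (n : ℝ) ^ s * a n * cosSinRemainder s m n := by
  have hm' : (0 : ℝ) < m := by positivity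
  have hparts : ∑ n ∈ S, a n * cosSinIntegral m n =
      ∑ n ∈ S.erase 0, a n * ((n / m : ℝ) ^ 2 * cosSinIntegral m n) := by
    rw [Finset.sum_erase S (by simp)]
    refine mul_left_cancel₀ (pow_ne_zero 2 hm'.ne') ?_
    rw [sq_mul_sum_mul_cosSinIntegral h0 hπ, Finset.mul_sum]
    exact Finset.sum_congr rfl fun n _ ↦ by field_simp
  rw [hparts, Finset.mul_sum, ← Finset.sum_add_distrib]
  refine Finset.sum_congr rfl fun n hn ↦ ?_
  have hn' : (0 : ℝ) < n := Nat.cast_pos.2 (Nat.pos_of_ne_zero (Finset.ne_of_mem_erase hn))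
  have hscale : (m : ℝ) ^ s * (n / m : ℝ) ^ 2 = (n : ℝ) ^ s * (n / m : ℝ) ^ (2 - s) := by
    rw [rpow_sub (by positivity), rpow_two, div_rpow hn'.le hm'.le]
    field_simp
  rw [cosSinRemainder]
  linear_combination a n * cosSinIntegral m n * hscale

theorem sum_rpow_mul_sq_sum_mul_cosSinIntegral_le {s ε : ℝ} (hε : 0 < ε) (hε' : ε ≤ 1 / 2)
    (hs : 1 / 2 + ε ≤ s) (hs' : s ≤ 5 / 2 - ε) {S : Finset ℕ} {a : ℕ → ℝ}
    (h0 : ∑ n ∈ S, a n = 0) (hπ : ∑ n ∈ S, (-1 : ℝ) ^ n * a n = 0) {M : Finset ℕ} (hM : 0 ∉ M) :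
    ∑ m ∈ M, (m : ℝ) ^ (2 * s) * (∑ n ∈ S, a n * cosSinIntegral m n) ^ 2 ≤
      2 * ((π / 2) ^ 2 + (4 / ε) ^ 2) * ∑ n ∈ S, (n : ℝ) ^ (2 * s) * a n ^ 2 := by
  have hsq : ∀ n : ℕ, ∀ x : ℝ, (n : ℝ) ^ (2 * s) * x ^ 2 = ((n : ℝ) ^ s * x) ^ 2 := fun n x ↦ by
    rw [mul_comm 2 s, rpow_mul n.cast_nonneg, rpow_two, mul_pow]
  have hS : 0 ∉ S.erase 0 := Finset.notMem_erase 0 S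
  set c : ℕ → ℝ := fun n ↦ (n : ℝ) ^ s * a n
  have hmain := sum_sq_sum_mul_cosSinIntegral_le hM hS c
  have hrem : ∑ m ∈ M, (∑ n ∈ S.erase 0, c n * cosSinRemainder s m n) ^ 2 ≤
      (4 / ε) ^ 2 * ∑ n ∈ S.erase 0, c n ^ 2 := by
    have h := sum_sq_sum_mul_le_of_abs_le_min_div_rpow (k := cosSinRemainder s) zero_le_two hε
      (by linarith) hM hS (fun m hm n hn ↦ abs_cosSinRemainder_le hε.le hε' hs hs'
        (ne_of_mem_of_not_mem hm hM) (ne_of_mem_of_not_mem hn hS)) c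
    rwa [show (2 * 2 : ℝ) = 4 by norm_num] at h
  calc ∑ m ∈ M, (m : ℝ) ^ (2 * s) * (∑ n ∈ S, a n * cosSinIntegral m n) ^ 2
      = ∑ m ∈ M, (∑ n ∈ S.erase 0, c n * cosSinIntegral m n +
          ∑ n ∈ S.erase 0, c n * cosSinRemainder s m n) ^ 2 :=
        Finset.sum_congr rfl fun m hm ↦ by
          rw [hsq, rpow_mul_sum_mul_cosSinIntegral s h0 hπ (ne_of_mem_of_not_mem hm hM)]
    _ ≤ ∑ m ∈ M, 2 * ((∑ n ∈ S.erase 0, c n * cosSinIntegral m n) ^ 2 +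
          (∑ n ∈ S.erase 0, c n * cosSinRemainder s m n) ^ 2) :=
        Finset.sum_le_sum fun _ _ ↦ add_sq_le
    _ ≤ 2 * ((π / 2) ^ 2 + (4 / ε) ^ 2) * ∑ n ∈ S.erase 0, c n ^ 2 := by
        rw [← Finset.mul_sum, Finset.sum_add_distrib]
        linarith
    _ ≤ 2 * ((π / 2) ^ 2 + (4 / ε) ^ 2) * ∑ n ∈ S, (n : ℝ) ^ (2 * s) * a n ^ 2 := by
        simp_rw [hsq]
        gcongr
        exact Finset.erase_subset 0 S

theorem stmt7_general (s : ℝ) (hs0 : 1 / 2 < s) (hs : s < 5 / 2) :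
    ∃ C > 0, ∀ a : ℕ → ℝ, ∀ ha : (Function.support a).Finite,
      (∑ n ∈ ha.toFinset, a n = 0) →
      (∑ n ∈ ha.toFinset, (-1 : ℝ) ^ n * a n = 0) →
      ∀ M : Finset ℕ, (∀ m ∈ M, 1 ≤ m) →
        ∑ m ∈ M, (m : ℝ) ^ (2 * s) *
            ((2 / π) * ∫ t in (0 : ℝ)..π,
              (∑ n ∈ ha.toFinset, a n * cos (n * t)) * sin (m * t)) ^ 2
          ≤ C * ∑ n ∈ ha.toFinset, (1 + (n : ℝ)) ^ (2 * s) * a n ^ 2 := by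
  obtain ⟨ε, hε, hε', hεs, hεs'⟩ : ∃ ε : ℝ, 0 < ε ∧ ε ≤ 1 / 2 ∧ 1 / 2 + ε ≤ s ∧ s ≤ 5 / 2 - ε := by
    refine ⟨min (1 / 2) (min (s - 1 / 2) (5 / 2 - s)), ?_, ?_, ?_, ?_⟩ <;> grind
  set K := 2 * ((π / 2) ^ 2 + (4 / ε) ^ 2)
  refine ⟨(2 / π) ^ 2 * K, by positivity, fun a ha h0 hπ M hM ↦ ?_⟩
  have hM0 : 0 ∉ M := fun h ↦ by simpa using hM 0 h
  calc _ = (2 / π) ^ 2 * ∑ m ∈ M, (m : ℝ) ^ (2 * s) *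
          (∑ n ∈ ha.toFinset, a n * cosSinIntegral m n) ^ 2 := by
        rw [Finset.mul_sum]
        refine Finset.sum_congr rfl fun m _ ↦ ?_
        rw [integral_sum_mul (fun n _ ↦ by fun_prop) (by fun_prop), mul_pow, mul_left_comm]
        rfl
    _ ≤ (2 / π) ^ 2 * (K * ∑ n ∈ ha.toFinset, (n : ℝ) ^ (2 * s) * a n ^ 2) := by
        gcongr
        exact sum_rpow_mul_sq_sum_mul_cosSinIntegral_le hε hε' hεs hεs' h0 hπ hM0
    _ ≤ (2 / π) ^ 2 * K * ∑ n ∈ ha.toFinset, (1 + (n : ℝ)) ^ (2 * s) * a n ^ 2 := by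
        rw [← mul_assoc]
        gcongr
        exact le_add_of_nonneg_left zero_le_one

/-- For `s ∈ (1/2, 2]`, restriction to `[0,π]` is bounded from the subspace of
the periodic Sobolev space `H^s` of functions vanishing at `0` and `π` into the
Dirichlet Sobolev space `H^s₀`, expressed in Fourier coefficients: for an even
trigonometric polynomial `f(t) = ∑ a_n cos(nt)` with `f(0) = f(π) = 0`, the
sine coefficients `b_m = (2/π)∫₀^π f(t) sin(mt) dt` satisfy
`∑ m^{2s} b_m² ≤ C ∑ (1+n)^{2s} a_n²`. -/
theorem stmt7 (s : ℝ) (hs0 : 1 / 2 < s) (hs : s ≤ 2) :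
    ∃ C > 0, ∀ a : ℕ → ℝ, ∀ ha : (Function.support a).Finite,
      (∑ n ∈ ha.toFinset, a n = 0) →
      (∑ n ∈ ha.toFinset, (-1 : ℝ) ^ n * a n = 0) →
      ∀ M : Finset ℕ, (∀ m ∈ M, 1 ≤ m) →
        ∑ m ∈ M, (m : ℝ) ^ (2 * s) *
            ((2 / π) * ∫ t in (0:ℝ)..π,
              (∑ n ∈ ha.toFinset, a n * Real.cos (n * t)) * Real.sin (m * t)) ^ 2
          ≤ C * ∑ n ∈ ha.toFinset, (1 + (n : ℝ)) ^ (2 * s) * (a n) ^ 2 :=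
  stmt7_general s hs0 (by linarith)
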